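/- Let 𝕜 be an algebraically closed field of characteristic zero and n ≥ 1 an integer. Let Ω, Ω' ∈ 𝕜[x,y,z] be homogeneous polynomials of degree n+3 with isolated singularities and let ξ, ξ' ∈ 𝕜. Let R be a Poisson 𝕜-algebra which is an integral domain such that for every r ∈ R∖𝕜·1 there exists a nonpositive (n−1)-valuation ν on R with ν(r) < 0. Then every injective Poisson 𝕜-algebra morphism f : P_{Ω−ξ} → P_{Ω'−ξ'} ⊗_𝕜 R satisfies im(f) = P_{Ω'−ξ'} ⊗ 𝕜·1. -/

import Mathlib

open scoped TensorProduct

/-- A Poisson bracket on a commutative algebra `A` over `𝕜`: a bilinear, antisymmetric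
bracket satisfying the Jacobi identity and the Leibniz rule. -/
structure PoissonStructure (𝕜 A : Type*) [CommRing 𝕜] [CommRing A] [Algebra 𝕜 A] where
  bracket : A → A → A
  add_left : ∀ a b c : A, bracket (a + b) c = bracket a c + bracket b c
  smul_left : ∀ (r : 𝕜) (a b : A), bracket (r • a) b = r • bracket a b
  antisymm : ∀ a b : A, bracket a b = - bracket b a
  jacobi : ∀ a b c : A,
    bracket a (bracket b c) + bracket b (bracket c a) + bracket c (bracket a b) = 0
  leibniz : ∀ a b c : A, bracket a (b * c) = bracket a b * c + b * bracket a c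

/-- `f` is a morphism of Poisson algebras. -/
def IsPoissonHom {𝕜 A B : Type*} [CommRing 𝕜] [CommRing A] [CommRing B]
    [Algebra 𝕜 A] [Algebra 𝕜 B]
    (PA : PoissonStructure 𝕜 A) (PB : PoissonStructure 𝕜 B) (f : A →ₐ[𝕜] B) : Prop :=
  ∀ a b : A, f (PA.bracket a b) = PB.bracket (f a) (f b)

/-- A Poisson algebra is Dixmier if every injective Poisson endomorphism is bijective. -/
def IsDixmier (𝕜 A : Type*) [CommRing 𝕜] [CommRing A] [Algebra 𝕜 A]
    (PA : PoissonStructure 𝕜 A) : Prop :=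
  ∀ f : A →ₐ[𝕜] A, IsPoissonHom PA PA f → Function.Injective f → Function.Bijective f

/-- The tensor-product Poisson bracket on `A ⊗[𝕜] B`. -/
def IsTensorBracket {𝕜 A B : Type*} [CommRing 𝕜] [CommRing A] [CommRing B]
    [Algebra 𝕜 A] [Algebra 𝕜 B] (PA : PoissonStructure 𝕜 A) (PB : PoissonStructure 𝕜 B)
    (PT : PoissonStructure 𝕜 (A ⊗[𝕜] B)) : Prop :=
  ∀ (a a' : A) (b b' : B),
    PT.bracket (a ⊗ₜ[𝕜] b) (a' ⊗ₜ[𝕜] b') =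
      PA.bracket a a' ⊗ₜ[𝕜] (b * b') + (a * a') ⊗ₜ[𝕜] PB.bracket b b'

/-- `A` is `R`-Dixmier: every injective Poisson morphism `A → A ⊗ R` has image `A ⊗ 𝕜·1`. -/
def IsRelDixmier (𝕜 A R : Type*) [CommRing 𝕜] [CommRing A] [CommRing R]
    [Algebra 𝕜 A] [Algebra 𝕜 R] (PA : PoissonStructure 𝕜 A)
    (PT : PoissonStructure 𝕜 (A ⊗[𝕜] R)) : Prop :=
  ∀ f : A →ₐ[𝕜] A ⊗[𝕜] R, IsPoissonHom PA PT f → Function.Injective f →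
    Set.range f = Set.range fun a : A => a ⊗ₜ[𝕜] (1 : R)

/-- A Poisson algebra is Poisson simple if its only Poisson ideals are `0` and the whole ring. -/
def IsPoissonSimple {𝕜 A : Type*} [CommRing 𝕜] [CommRing A] [Algebra 𝕜 A]
    (PA : PoissonStructure 𝕜 A) : Prop :=
  ∀ I : Ideal A, (∀ x : A, ∀ y ∈ I, PA.bracket x y ∈ I) → I = ⊥ ∨ I = ⊤

open MvPolynomial in
/-- The Jacobian Poisson bracket with potential `Ω` on `𝕜[x,y,z]`. -/
noncomputable def jacBracket {𝕜 : Type*} [CommRing 𝕜]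
    (Ω f g : MvPolynomial (Fin 3) 𝕜) : MvPolynomial (Fin 3) 𝕜 :=
  Matrix.det (Matrix.of
    ![![pderiv 0 f, pderiv 1 f, pderiv 2 f],
      ![pderiv 0 g, pderiv 1 g, pderiv 2 g],
      ![pderiv 0 Ω, pderiv 1 Ω, pderiv 2 Ω]])

open MvPolynomial in
/-- `Ω` has an isolated singularity at the origin. -/
def HasIsolatedSingularity {𝕜 : Type*} [Field 𝕜] (Ω : MvPolynomial (Fin 3) 𝕜) : Prop :=
  FiniteDimensional 𝕜
    (MvPolynomial (Fin 3) 𝕜 ⧸ Ideal.span {pderiv (0 : Fin 3) Ω, pderiv 1 Ω, pderiv 2 Ω})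

/-- The underlying commutative algebra of `P_{Ω-ξ} = 𝕜[x,y,z]/(Ω-ξ)`. -/
def PQuot (𝕜 : Type*) [CommRing 𝕜] (Ω : MvPolynomial (Fin 3) 𝕜) (ξ : 𝕜) : Type _ :=
  MvPolynomial (Fin 3) 𝕜 ⧸ Ideal.span {Ω - MvPolynomial.C ξ}

noncomputable instance {𝕜 : Type*} [CommRing 𝕜] (Ω : MvPolynomial (Fin 3) 𝕜) (ξ : 𝕜) :
    CommRing (PQuot 𝕜 Ω ξ) :=
  inferInstanceAs (CommRing (MvPolynomial (Fin 3) 𝕜 ⧸ Ideal.span {Ω - MvPolynomial.C ξ}))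

noncomputable instance {𝕜 : Type*} [CommRing 𝕜] (Ω : MvPolynomial (Fin 3) 𝕜) (ξ : 𝕜) :
    Algebra 𝕜 (PQuot 𝕜 Ω ξ) :=
  inferInstanceAs (Algebra 𝕜 (MvPolynomial (Fin 3) 𝕜 ⧸ Ideal.span {Ω - MvPolynomial.C ξ}))

/-- The canonical (surjective) projection `𝕜[x,y,z] → P_{Ω-ξ}`. -/
noncomputable def PQuot.mk {𝕜 : Type*} [CommRing 𝕜] (Ω : MvPolynomial (Fin 3) 𝕜) (ξ : 𝕜)
    (f : MvPolynomial (Fin 3) 𝕜) : PQuot 𝕜 Ω ξ :=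
  Ideal.Quotient.mk (Ideal.span {Ω - MvPolynomial.C ξ}) f

/-- `P` is the Poisson bracket on `P_{Ω-ξ}` induced from the Jacobian bracket on `A_Ω`. -/
def IsInducedBracket {𝕜 : Type*} [CommRing 𝕜] (Ω : MvPolynomial (Fin 3) 𝕜) (ξ : 𝕜)
    (P : PoissonStructure 𝕜 (PQuot 𝕜 Ω ξ)) : Prop :=
  ∀ f g : MvPolynomial (Fin 3) 𝕜,
    P.bracket (PQuot.mk Ω ξ f) (PQuot.mk Ω ξ g) = PQuot.mk Ω ξ (jacBracket Ω f g)

open PiTensorProduct in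
/-- The Poisson bracket on a finite tensor product `⨂[𝕜] i, A i`. -/
def IsPiTensorBracket {𝕜 : Type*} [CommRing 𝕜] {d : ℕ} {A : Fin d → Type*}
    [∀ i, CommRing (A i)] [∀ i, Algebra 𝕜 (A i)]
    (P : ∀ i, PoissonStructure 𝕜 (A i))
    (PT : PoissonStructure 𝕜 (⨂[𝕜] i, A i)) : Prop :=
  ∀ a b : (i : Fin d) → A i,
    PT.bracket (⨂ₜ[𝕜] i, a i) (⨂ₜ[𝕜] i, b i) =
      ∑ i : Fin d,
        ⨂ₜ[𝕜] j, Function.update (fun j => a j * b j) i ((P i).bracket (a i) (b i)) j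

/-- The Poisson-torus bracket associated to a matrix `Λ` on the Laurent polynomial ring
`𝕜[x₁^{±1},…,xₙ^{±1}]`, realized as the group algebra of `ℤⁿ`:
`{x^u, x^v} = (Σ_{i,j} uᵢ λᵢⱼ vⱼ) x^{u+v}`. -/
def IsTorusBracket {𝕜 : Type*} [CommRing 𝕜] (n : ℕ) (Λ : Matrix (Fin n) (Fin n) 𝕜)
    (P : PoissonStructure 𝕜 (AddMonoidAlgebra 𝕜 (Fin n → ℤ))) : Prop :=
  ∀ u v : Fin n → ℤ,
    P.bracket (AddMonoidAlgebra.single u (1 : 𝕜)) (AddMonoidAlgebra.single v (1 : 𝕜)) =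
      (∑ i, ∑ j, (u i : 𝕜) * Λ i j * (v j : 𝕜)) • AddMonoidAlgebra.single (u + v) (1 : 𝕜)

/-- `ν : A → ℤ ∪ {∞}` is a `w`-valuation on the Poisson algebra `A`. -/
structure IsWValuation {𝕜 A : Type*} [CommRing 𝕜] [CommRing A] [Algebra 𝕜 A]
    (P : PoissonStructure 𝕜 A) (w : ℤ) (ν : A → WithTop ℤ) : Prop where
  eq_top_iff : ∀ a : A, ν a = ⊤ ↔ a = 0
  scalar : ∀ c : 𝕜, c ≠ 0 → ν (algebraMap 𝕜 A c) = 0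
  map_mul : ∀ a b : A, ν (a * b) = ν a + ν b
  map_add : ∀ a b : A, min (ν a) (ν b) ≤ ν (a + b)
  map_bracket : ∀ a b : A, ν a + ν b ≤ ν (P.bracket a b) + (w : WithTop ℤ)

/-!
Since `Ω` is homogeneous with an isolated singularity, a power of each generator `xᵢ` is a
homogeneous combination of the partial derivatives of `Ω`, and these are the brackets of pairs of
generators. Hence, if a Poisson algebra is filtered with bracket of degree at most `w` and reduced
associated graded ring, a Poisson morphism `f` from `P_{Ω-ξ}` into it cannot have
`maxᵢ deg f(xᵢ) = m` with `w < n m`: comparing degrees in the relation for `xᵢ ^ N` shows that the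
leading term of `f(xᵢ)` would be nilpotent.

For `w = n - 1` and the filtration of `P_{Ω'-ξ'} ⊗ R` coming from a valuation of `R`, this puts
`f(xᵢ)` in filtration degree `0`. The coefficients in `R` of `f(xᵢ)` thus lie in the common
degree `0` part of all valuations, which is `𝕜`, so that `f` factors through `P_{Ω'-ξ'}`.
For `w = n` and the degree filtration of `P_{Ω'-ξ'}`, it shows that `f` maps polynomials of degree
at most `1` to such polynomials. By injectivity and equality of dimensions the image contains the
generators of `P_{Ω'-ξ'}`.
-/

section Polynomial

open MvPolynomial

variable {σ R : Type*}

section CommSemiring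

variable [CommSemiring R] {p q : MvPolynomial σ R} {d i j k : ℕ}

theorem totalDegree_le_iff_forall_degree_le :
    p.totalDegree ≤ k ↔ ∀ s, coeff s p ≠ 0 → s.degree ≤ k := by
  simp only [totalDegree, Finset.sup_le_iff, mem_support_iff]
  rfl

theorem totalDegree_pderiv_lt {i : σ} (h : pderiv i p ≠ 0) :
    (pderiv i p).totalDegree < p.totalDegree := by
  have hcoeff : ∀ s, coeff s (pderiv i p) ≠ 0 → s.degree + 1 ≤ p.totalDegree := fun s hs => by
    rw [coeff_pderiv] at hs
    simpa using totalDegree_le_iff_forall_degree_le.1 le_rfl _ (left_ne_zero_of_mul hs)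
  obtain ⟨s, hs⟩ := exists_coeff_ne_zero h
  refine Nat.lt_of_le_sub_one (by linarith [hcoeff s hs]) ?_
  exact totalDegree_le_iff_forall_degree_le.2 fun s hs => Nat.le_sub_one_of_lt (hcoeff s hs)

theorem homogeneousComponent_mul_of_totalDegree_le (hp : p.totalDegree ≤ i)
    (hq : q.totalDegree ≤ j) :
    homogeneousComponent (i + j) (p * q) =
      homogeneousComponent i p * homogeneousComponent j q := by
  classical
  rw [totalDegree_le_iff_forall_degree_le] at hp hq
  ext s
  simp only [coeff_homogeneousComponent, coeff_mul]
  trans ∑ x ∈ Finset.HasAntidiagonal.antidiagonal s,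
    if s.degree = i + j then coeff x.1 p * coeff x.2 q else 0
  · split_ifs <;> simp
  refine Finset.sum_congr rfl fun x hx => ?_
  have hs : x.1.degree + x.2.degree = s.degree := by
    rw [← map_add, Finset.HasAntidiagonal.mem_antidiagonal.1 hx]
  by_cases hx₁ : coeff x.1 p = 0
  · simp [hx₁]
  by_cases hx₂ : coeff x.2 q = 0
  · simp [hx₂]
  have hiff : s.degree = i + j ↔ x.1.degree = i ∧ x.2.degree = j := by
    have := hp _ hx₁
    have := hq _ hx₂
    omega
  simp only [hiff, ite_zero_mul_ite_zero]

theorem homogeneousComponent_pow_of_totalDegree_le (hp : p.totalDegree ≤ k) (N : ℕ) :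
    homogeneousComponent (N * k) (p ^ N) = homogeneousComponent k p ^ N := by
  induction N with
  | zero => simp
  | succ N ih =>
    rw [pow_succ, pow_succ, Nat.succ_mul, ← ih]
    exact homogeneousComponent_mul_of_totalDegree_le
      ((totalDegree_pow p N).trans (Nat.mul_le_mul_left N hp)) hp

theorem homogeneousComponent_mul_of_isHomogeneous (hq : q.IsHomogeneous d) (e : ℕ)
    (p : MvPolynomial σ R) :
    homogeneousComponent (e + d) (p * q) = homogeneousComponent e p * q := by
  classical
  let : GradedAlgebra (homogeneousSubmodule σ R) := gradedAlgebra
  simp only [← decomposition.decompose'_apply]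
  exact DirectSum.coe_decompose_mul_add_of_right_mem (homogeneousSubmodule σ R)
    ((mem_homogeneousSubmodule d q).2 hq)

end CommSemiring

section CommRing

variable [CommRing R] {p q r Ω : MvPolynomial σ R} {d k : ℕ}

theorem totalDegree_sub_homogeneousComponent_le (hp : p.totalDegree ≤ k + 1) :
    (p - homogeneousComponent (k + 1) p).totalDegree ≤ k := by
  rw [totalDegree_le_iff_forall_degree_le] at hp ⊢
  intro s hs
  rw [coeff_sub, coeff_homogeneousComponent] at hs
  split_ifs at hs with hdeg
  · exact absurd (sub_self _) hs
  · exact Nat.le_of_lt_succ (lt_of_le_of_ne (hp s (by simpa using hs)) hdeg)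

theorem homogeneousComponent_sub_C (hΩ : Ω.IsHomogeneous d) (hd : 0 < d) (ξ : R) :
    homogeneousComponent d (Ω - C ξ) = Ω := by
  rw [map_sub, homogeneousComponent_eq_self hΩ,
    homogeneousComponent_eq_zero d (C ξ) (by rwa [totalDegree_C]), sub_zero]

theorem totalDegree_sub_C (hΩ : Ω.IsHomogeneous d) (hΩ₀ : Ω ≠ 0) (hd : 0 < d) (ξ : R) :
    (Ω - C ξ).totalDegree = d := by
  rw [sub_eq_add_neg, ← C_neg, totalDegree_add_eq_left_of_totalDegree_lt, hΩ.totalDegree hΩ₀]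
  rwa [totalDegree_C, hΩ.totalDegree hΩ₀]

variable [IsDomain R]

theorem totalDegree_mul_sub_C (hΩ : Ω.IsHomogeneous d) (hΩ₀ : Ω ≠ 0) (hd : 0 < d) (ξ : R)
    (hq : q ≠ 0) : (q * (Ω - C ξ)).totalDegree = q.totalDegree + d := by
  have hdeg := totalDegree_sub_C hΩ hΩ₀ hd ξ
  rw [totalDegree_mul_of_isDomain hq, hdeg]
  rintro h
  rw [h, totalDegree_zero] at hdeg
  exact hd.ne hdeg

theorem eq_zero_of_sub_C_dvd (hΩ : Ω.IsHomogeneous d) (hΩ₀ : Ω ≠ 0) {ξ : R}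
    (hp : p.totalDegree < d) (h : Ω - C ξ ∣ p) : p = 0 := by
  obtain ⟨q, rfl⟩ := exists_eq_mul_left_of_dvd h
  by_contra hne
  rw [totalDegree_mul_sub_C hΩ hΩ₀ (by omega) ξ (left_ne_zero_of_mul hne)] at hp
  omega

theorem dvd_homogeneousComponent_of_sub_C_dvd (hΩ : Ω.IsHomogeneous d) (hΩ₀ : Ω ≠ 0) (hd : 0 < d)
    {ξ : R} (hp : p.totalDegree ≤ k) (h : Ω - C ξ ∣ p) : Ω ∣ homogeneousComponent k p := by
  obtain ⟨q, rfl⟩ := exists_eq_mul_left_of_dvd h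
  obtain rfl | hq := eq_or_ne q 0
  · simp
  rw [totalDegree_mul_sub_C hΩ hΩ₀ hd ξ hq] at hp
  obtain ⟨e, rfl⟩ := Nat.exists_eq_add_of_le' (le_of_add_le_right hp)
  rw [homogeneousComponent_mul_of_totalDegree_le (Nat.le_of_add_le_add_right hp)
    (totalDegree_sub_C hΩ hΩ₀ hd ξ).le, homogeneousComponent_sub_C hΩ hd]
  exact dvd_mul_left _ _

theorem exists_totalDegree_sub_mul_sub_C_le (hΩ : Ω.IsHomogeneous d) (hΩ₀ : Ω ≠ 0) (ξ : R)
    (hd : 0 < d) (hp : p.totalDegree ≤ k + 1) (h : Ω ∣ homogeneousComponent (k + 1) p) :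
    ∃ q, (p - q * (Ω - C ξ)).totalDegree ≤ k := by
  obtain ⟨q, hq⟩ := exists_eq_mul_left_of_dvd h
  have hqk : q.totalDegree ≤ k := by
    obtain rfl | hq₀ := eq_or_ne q 0
    · simp
    have hdeg := (homogeneousComponent_isHomogeneous (k + 1) p).totalDegree
      (hq ▸ mul_ne_zero hq₀ hΩ₀)
    rw [hq, totalDegree_mul_of_isDomain hq₀ hΩ₀, hΩ.totalDegree hΩ₀] at hdeg
    omega
  refine ⟨q, ?_⟩
  have hsub : p - q * (Ω - C ξ) = (p - homogeneousComponent (k + 1) p) + ξ • q := by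
    rw [hq, smul_eq_C_mul]; ring
  rw [hsub]
  exact (totalDegree_add _ _).trans (max_le (totalDegree_sub_homogeneousComponent_le hp)
    ((totalDegree_smul_le ξ q).trans hqk))

theorem exists_totalDegree_sub_mul_le_of_dvd_pow_sub (hΩ : Ω.IsHomogeneous d) (hΩ₀ : Ω ≠ 0)
    (hd : 0 < d) (hrad : IsRadical Ω) {ξ : R} {N : ℕ} (hp : p.totalDegree ≤ k + 1)
    (hr : r.totalDegree < N * (k + 1)) (h : Ω - C ξ ∣ p ^ N - r) :
    ∃ q, (p - q * (Ω - C ξ)).totalDegree ≤ k := by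
  have hpow : (p ^ N).totalDegree ≤ N * (k + 1) :=
    (totalDegree_pow p N).trans (Nat.mul_le_mul_left N hp)
  have hdvd := dvd_homogeneousComponent_of_sub_C_dvd hΩ hΩ₀ hd
    ((totalDegree_sub _ _).trans (max_le hpow hr.le)) h
  rw [map_sub, homogeneousComponent_eq_zero _ r hr, sub_zero,
    homogeneousComponent_pow_of_totalDegree_le hp] at hdvd
  exact exists_totalDegree_sub_mul_sub_C_le hΩ hΩ₀ ξ hd hp (hrad N _ hdvd)

end CommRing

end Polynomial

section Quotient

open MvPolynomial

variable {σ 𝕜 : Type*} [Field 𝕜]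

theorem exists_X_pow_eq_sum_mul {ι : Type*} [Fintype ι] {f : ι → MvPolynomial σ 𝕜} {d : ℕ}
    (hf : ∀ k, (f k).IsHomogeneous d)
    [Module.Finite 𝕜 (MvPolynomial σ 𝕜 ⧸ Ideal.span (Set.range f))] (i : σ) :
    ∃ (e : ℕ) (g : ι → MvPolynomial σ 𝕜), (∀ k, (g k).IsHomogeneous e) ∧
      (X i : MvPolynomial σ 𝕜) ^ (e + d) = ∑ k, g k * f k := by
  obtain ⟨q, hmonic, hq⟩ :=
    IsIntegral.of_finite 𝕜 (Ideal.Quotient.mkₐ 𝕜 (Ideal.span (Set.range f)) (X i))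
  have hmem : Polynomial.aeval (X i : MvPolynomial σ 𝕜) q ∈ Ideal.span (Set.range f) := by
    rw [← Ideal.Quotient.eq_zero_iff_mem, ← Ideal.Quotient.mkₐ_eq_mk 𝕜,
      ← Polynomial.aeval_algHom_apply]
    exact hq
  have htop : homogeneousComponent q.natDegree (Polynomial.aeval (X i) q) =
      (X i : MvPolynomial σ 𝕜) ^ q.natDegree := by
    rw [Polynomial.aeval_eq_sum_range, map_sum, Finset.sum_eq_single q.natDegree]
    · rw [hmonic.coeff_natDegree, one_smul, homogeneousComponent_eq_self (isHomogeneous_X_pow i _)]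
    · intro j _ hj
      rw [map_smul, homogeneousComponent_of_mem (isHomogeneous_X_pow i j), if_neg hj.symm,
        smul_zero]
    · simp
  obtain ⟨c, hc⟩ := Ideal.mem_span_range_iff_exists_fun.1 hmem
  refine ⟨q.natDegree, fun k => homogeneousComponent q.natDegree (X i ^ d * c k),
    fun k => homogeneousComponent_isHomogeneous _ _, ?_⟩
  calc (X i : MvPolynomial σ 𝕜) ^ (q.natDegree + d)
      = homogeneousComponent (q.natDegree + d) (Polynomial.aeval (X i) q * X i ^ d) := by
        rw [homogeneousComponent_mul_of_isHomogeneous (isHomogeneous_X_pow i d), htop, pow_add]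
    _ = ∑ k, homogeneousComponent (q.natDegree + d) (X i ^ d * c k * f k) := by
        rw [← hc, mul_comm, Finset.mul_sum, map_sum]
        simp only [mul_assoc]
    _ = ∑ k, homogeneousComponent q.natDegree (X i ^ d * c k) * f k := by
        simp only [homogeneousComponent_mul_of_isHomogeneous (hf _)]

theorem eq_zero_of_forall_algHom_eq_zero [IsAlgClosed 𝕜] [Finite σ]
    {I : Ideal (MvPolynomial σ 𝕜)} (hI : I.IsRadical) {b : MvPolynomial σ 𝕜 ⧸ I}
    (hb : ∀ φ : (MvPolynomial σ 𝕜 ⧸ I) →ₐ[𝕜] 𝕜, φ b = 0) : b = 0 := by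
  obtain ⟨p, rfl⟩ := Ideal.Quotient.mk_surjective b
  rw [Ideal.Quotient.eq_zero_iff_mem, ← hI.radical, ← vanishingIdeal_zeroLocus_eq_radical (K := 𝕜)]
  exact fun x hx => hb (Ideal.Quotient.liftₐ I (aeval x) hx)

end Quotient

namespace HasIsolatedSingularity

open MvPolynomial

variable {𝕜 : Type*} [Field 𝕜] {Ω : MvPolynomial (Fin 3) 𝕜} {d : ℕ}

theorem exists_X_pow_eq_sum_mul_pderiv (hiso : HasIsolatedSingularity Ω)
    (hΩ : Ω.IsHomogeneous (d + 1)) (i : Fin 3) :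
    ∃ (e : ℕ) (g : Fin 3 → MvPolynomial (Fin 3) 𝕜), (∀ k, (g k).IsHomogeneous e) ∧
      (X i : MvPolynomial (Fin 3) 𝕜) ^ (e + d) = ∑ k, g k * pderiv k Ω := by
  have hspan : ({pderiv 0 Ω, pderiv 1 Ω, pderiv 2 Ω} : Set (MvPolynomial (Fin 3) 𝕜)) =
      Set.range fun k => pderiv k Ω := by
    ext p
    simp [Fin.exists_fin_succ, eq_comm]
  unfold HasIsolatedSingularity at hiso
  rw [hspan] at hiso
  exact exists_X_pow_eq_sum_mul (fun k => hΩ.pderiv) i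

theorem squarefree_sub_C (hiso : HasIsolatedSingularity Ω) (hΩ : Ω.IsHomogeneous (d + 1)) (ξ : 𝕜) :
    Squarefree (Ω - C ξ) := by
  rintro p ⟨q, hq⟩
  have hpderiv : ∀ k, p ∣ pderiv k Ω := fun k => by
    have h : pderiv k Ω = pderiv k (Ω - C ξ) := by simp
    rw [h, hq, Derivation.leibniz, Derivation.leibniz]
    simp only [smul_eq_mul]
    exact ⟨p * pderiv k q + q * (pderiv k p + pderiv k p), by ring⟩
  have hX : ∀ i : Fin 3, ∃ N, p ∣ (X i : MvPolynomial (Fin 3) 𝕜) ^ N := fun i => by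
    obtain ⟨e, g, -, h⟩ := hiso.exists_X_pow_eq_sum_mul_pderiv hΩ i
    exact ⟨e + d, h ▸ Finset.dvd_sum fun k _ => (hpderiv k).mul_left _⟩
  obtain ⟨N, hN⟩ := hX 0
  obtain ⟨M, hM⟩ := hX 1
  have hrel : IsRelPrime (X 0 : MvPolynomial (Fin 3) 𝕜) (X 1) := by
    rw [(X_prime (i := (0 : Fin 3))).irreducible.isRelPrime_iff_not_dvd, X_dvd_X]
    decide
  exact hrel.pow hN hM

theorem squarefree (hiso : HasIsolatedSingularity Ω) (hΩ : Ω.IsHomogeneous (d + 1)) :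
    Squarefree Ω := by
  simpa using hiso.squarefree_sub_C hΩ 0

end HasIsolatedSingularity

namespace PoissonStructure

variable {𝕜 A : Type*} [CommRing 𝕜] [CommRing A] [Algebra 𝕜 A]

/-- The bracket of a Poisson algebra as a bilinear map. -/
def bracketₗ (P : PoissonStructure 𝕜 A) : A →ₗ[𝕜] A →ₗ[𝕜] A :=
  LinearMap.mk₂ 𝕜 P.bracket P.add_left P.smul_left
    (fun a b c => by rw [P.antisymm, P.add_left, P.antisymm b, P.antisymm c, neg_add, neg_neg,
      neg_neg])
    (fun r a b => by rw [P.antisymm, P.smul_left, P.antisymm b, smul_neg, neg_neg])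

theorem bracketₗ_apply (P : PoissonStructure 𝕜 A) (a b : A) : P.bracketₗ a b = P.bracket a b :=
  rfl

theorem bracket_one_right (P : PoissonStructure 𝕜 A) (a : A) : P.bracket a 1 = 0 := by
  simpa using P.leibniz a 1 1

end PoissonStructure

theorem IsPoissonHom.of_comp_injective {𝕜 A B D : Type*} [CommRing 𝕜] [CommRing A] [CommRing B]
    [CommRing D] [Algebra 𝕜 A] [Algebra 𝕜 B] [Algebra 𝕜 D] {PA : PoissonStructure 𝕜 A}
    {PB : PoissonStructure 𝕜 B} {PD : PoissonStructure 𝕜 D} {j : B →ₐ[𝕜] D} {g : A →ₐ[𝕜] B}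
    (hj : IsPoissonHom PB PD j) (hj_inj : Function.Injective j)
    (hjg : IsPoissonHom PA PD (j.comp g)) : IsPoissonHom PA PB g := fun a b =>
  hj_inj ((hjg a b).trans (hj (g a) (g b)).symm)

theorem IsTensorBracket.isPoissonHom_includeLeft {𝕜 A B : Type*} [CommRing 𝕜] [CommRing A]
    [CommRing B] [Algebra 𝕜 A] [Algebra 𝕜 B] {PA : PoissonStructure 𝕜 A}
    {PB : PoissonStructure 𝕜 B} {PT : PoissonStructure 𝕜 (A ⊗[𝕜] B)}
    (hPT : IsTensorBracket PA PB PT) :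
    IsPoissonHom PA PT (Algebra.TensorProduct.includeLeft : A →ₐ[𝕜] A ⊗[𝕜] B) := fun a b => by
  simp [hPT a b, PB.bracket_one_right]

theorem jacBracket_X_X {𝕜 : Type*} [CommRing 𝕜] (Ω : MvPolynomial (Fin 3) 𝕜) (k : Fin 3) :
    jacBracket Ω (MvPolynomial.X (k + 1)) (MvPolynomial.X (k + 2)) = MvPolynomial.pderiv k Ω := by
  fin_cases k <;> simp [jacBracket, Matrix.det_fin_three, MvPolynomial.pderiv_X]

namespace PQuot

open MvPolynomial

variable {𝕜 : Type*} [CommRing 𝕜]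

/-- The projection `PQuot.mk` as an algebra homomorphism. -/
noncomputable def mkₐ (Ω : MvPolynomial (Fin 3) 𝕜) (ξ : 𝕜) :
    MvPolynomial (Fin 3) 𝕜 →ₐ[𝕜] PQuot 𝕜 Ω ξ :=
  Ideal.Quotient.mkₐ 𝕜 (Ideal.span {Ω - C ξ})

variable {Ω : MvPolynomial (Fin 3) 𝕜} {ξ : 𝕜}

theorem mkₐ_surjective : Function.Surjective (mkₐ Ω ξ) :=
  Ideal.Quotient.mk_surjective

theorem mkₐ_eq_zero_iff {p : MvPolynomial (Fin 3) 𝕜} : mkₐ Ω ξ p = 0 ↔ Ω - C ξ ∣ p :=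
  Ideal.Quotient.eq_zero_iff_dvd (Ω - C ξ) p

variable {B : Type*} [CommRing B] [Algebra 𝕜 B]

theorem apply_mkₐ (f : PQuot 𝕜 Ω ξ →ₐ[𝕜] B) (p : MvPolynomial (Fin 3) 𝕜) :
    f (mkₐ Ω ξ p) = aeval (fun i => f (mkₐ Ω ξ (X i))) p :=
  DFunLike.congr_fun (aeval_unique (f.comp (mkₐ Ω ξ))) p

theorem range_le_of_forall_X_mem (f : PQuot 𝕜 Ω ξ →ₐ[𝕜] B) {S : Subalgebra 𝕜 B}
    (hS : ∀ i, f (mkₐ Ω ξ (X i)) ∈ S) : f.range ≤ S := by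
  rintro _ ⟨a, rfl⟩
  obtain ⟨p, rfl⟩ := mkₐ_surjective a
  change f (mkₐ Ω ξ p) ∈ S
  refine Algebra.adjoin_le (Set.range_subset_iff.2 hS) ?_
  rw [Algebra.adjoin_range_eq_range_aeval, apply_mkₐ]
  exact AlgHom.mem_range_self _ p

end PQuot

theorem IsInducedBracket.apply_mkₐ_pderiv {𝕜 B : Type*} [CommRing 𝕜] [CommRing B] [Algebra 𝕜 B]
    {Ω : MvPolynomial (Fin 3) 𝕜} {ξ : 𝕜} {P : PoissonStructure 𝕜 (PQuot 𝕜 Ω ξ)}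
    (hP : IsInducedBracket Ω ξ P) {PB : PoissonStructure 𝕜 B} {f : PQuot 𝕜 Ω ξ →ₐ[𝕜] B}
    (hf : IsPoissonHom P PB f) (k : Fin 3) :
    f (PQuot.mkₐ Ω ξ (MvPolynomial.pderiv k Ω)) =
      PB.bracket (f (PQuot.mkₐ Ω ξ (MvPolynomial.X (k + 1))))
        (f (PQuot.mkₐ Ω ξ (MvPolynomial.X (k + 2)))) := by
  rw [← hf, ← jacBracket_X_X Ω k]
  exact congrArg f (hP _ _).symm

/-- An increasing exhaustive filtration of a Poisson algebra by subspaces that is multiplicative,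
is shifted by at most `w` under the bracket, and whose associated graded ring has no nonzero
nilpotents in positive degrees (`mem_of_pow_mem`). These are the properties of a filtration that
force Poisson images of the generators of `P_{Ω-ξ}` into small filtration degree. -/
structure IsReducedPoissonFiltration {𝕜 B : Type*} [CommRing 𝕜] [CommRing B] [Algebra 𝕜 B]
    (PB : PoissonStructure 𝕜 B) (w : ℕ) (F : ℕ → Submodule 𝕜 B) : Prop where
  mono : Monotone F
  exhaustive : ∀ b, ∃ k, b ∈ F k
  one_mem : 1 ∈ F 0
  mul_mem : ∀ {i j a b}, a ∈ F i → b ∈ F j → a * b ∈ F (i + j)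
  bracket_mem : ∀ {i j a b}, a ∈ F i → b ∈ F j → PB.bracket a b ∈ F (i + j + w)
  mem_of_pow_mem : ∀ {k j N b}, b ∈ F (k + 1) → b ^ N ∈ F j → j < N * (k + 1) → b ∈ F k

namespace IsReducedPoissonFiltration

open MvPolynomial

section CommRing

variable {𝕜 B : Type*} [CommRing 𝕜] [CommRing B] [Algebra 𝕜 B] {PB : PoissonStructure 𝕜 B} {w : ℕ}
  {F : ℕ → Submodule 𝕜 B}

theorem exhaustive_family (hF : IsReducedPoissonFiltration PB w F) {ι : Type*} [Finite ι]
    (x : ι → B) : ∃ k, ∀ i, x i ∈ F k := by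
  cases nonempty_fintype ι
  choose k hk using fun i => hF.exhaustive (x i)
  exact ⟨∑ i, k i, fun i => hF.mono (Finset.single_le_sum_of_canonicallyOrdered (Finset.mem_univ i))
    (hk i)⟩

theorem prod_mem (hF : IsReducedPoissonFiltration PB w F) {ι : Type*} {x : ι → B} {m : ι → ℕ}
    (s : Finset ι) (hx : ∀ i ∈ s, x i ∈ F (m i)) : ∏ i ∈ s, x i ∈ F (∑ i ∈ s, m i) := by
  classical
  induction s using Finset.induction_on with
  | empty => simpa using hF.one_mem
  | insert i s hi ih =>
    rw [Finset.prod_insert hi, Finset.sum_insert hi]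
    exact hF.mul_mem (hx i (by simp)) (ih fun j hj => hx j (by simp [hj]))

theorem pow_mem (hF : IsReducedPoissonFiltration PB w F) {b : B} {m : ℕ} (hb : b ∈ F m) (N : ℕ) :
    b ^ N ∈ F (N * m) := by
  simpa using hF.prod_mem (Finset.range N) fun _ _ => hb

theorem aeval_mem (hF : IsReducedPoissonFiltration PB w F) {σ : Type*} {x : σ → B} {m e : ℕ}
    (hx : ∀ i, x i ∈ F m) {p : MvPolynomial σ 𝕜} (hp : p.totalDegree ≤ e) :
    aeval x p ∈ F (e * m) := by
  rw [aeval_def, eval₂_eq]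
  refine sum_mem fun s hs => ?_
  rw [← Algebra.smul_def]
  refine Submodule.smul_mem _ _ (hF.mono (Nat.mul_le_mul_right m ((le_totalDegree hs).trans hp)) ?_)
  rw [Finsupp.sum, Finset.sum_mul]
  exact hF.prod_mem _ fun i _ => hF.pow_mem (hx i) (s i)

end CommRing

variable {𝕜 B : Type*} [Field 𝕜] [CommRing B] [Algebra 𝕜 B] {PB : PoissonStructure 𝕜 B} {w : ℕ}
  {F : ℕ → Submodule 𝕜 B} {Ω : MvPolynomial (Fin 3) 𝕜} {n : ℕ} {ξ : 𝕜}
  {P : PoissonStructure 𝕜 (PQuot 𝕜 Ω ξ)} {f : PQuot 𝕜 Ω ξ →ₐ[𝕜] B}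

theorem apply_mkₐ_mem (hF : IsReducedPoissonFiltration PB w F) {m e : ℕ}
    (hx : ∀ i, f (PQuot.mkₐ Ω ξ (X i)) ∈ F m) {p : MvPolynomial (Fin 3) 𝕜}
    (hp : p.totalDegree ≤ e) : f (PQuot.mkₐ Ω ξ p) ∈ F (e * m) := by
  rw [PQuot.apply_mkₐ]
  exact hF.aeval_mem hx hp

theorem apply_mkₐ_X_mem_of_mem_succ (hF : IsReducedPoissonFiltration PB w F)
    (hΩ : Ω.IsHomogeneous (n + 3)) (hiso : HasIsolatedSingularity Ω) (hP : IsInducedBracket Ω ξ P)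
    (hf : IsPoissonHom P PB f) {m : ℕ} (hwm : w < n * (m + 1))
    (hx : ∀ i, f (PQuot.mkₐ Ω ξ (X i)) ∈ F (m + 1)) (i : Fin 3) :
    f (PQuot.mkₐ Ω ξ (X i)) ∈ F m := by
  obtain ⟨e, g, hg, hpow⟩ := hiso.exists_X_pow_eq_sum_mul_pderiv hΩ i
  have hg_mem (k) : f (PQuot.mkₐ Ω ξ (g k)) ∈ F (e * (m + 1)) :=
    hF.apply_mkₐ_mem hx (hg k).totalDegree_le
  have hpderiv_mem (k) : f (PQuot.mkₐ Ω ξ (pderiv k Ω)) ∈ F ((m + 1) + (m + 1) + w) := by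
    rw [hP.apply_mkₐ_pderiv hf]
    exact hF.bracket_mem (hx _) (hx _)
  have hpow_mem : f (PQuot.mkₐ Ω ξ (X i)) ^ (e + (n + 2)) ∈
      F (e * (m + 1) + ((m + 1) + (m + 1) + w)) := by
    rw [← map_pow, ← map_pow, hpow]
    simp only [map_sum, map_mul]
    exact sum_mem fun k _ => hF.mul_mem (hg_mem k) (hpderiv_mem k)
  exact hF.mem_of_pow_mem (hx i) hpow_mem (by linarith)

theorem apply_mkₐ_X_mem (hF : IsReducedPoissonFiltration PB w F)
    (hΩ : Ω.IsHomogeneous (n + 3)) (hiso : HasIsolatedSingularity Ω) (hP : IsInducedBracket Ω ξ P)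
    (hf : IsPoissonHom P PB f) {l : ℕ} (hwl : w < n * (l + 1)) (i : Fin 3) :
    f (PQuot.mkₐ Ω ξ (X i)) ∈ F l := by
  obtain ⟨k, hk⟩ := hF.exhaustive_family fun i => f (PQuot.mkₐ Ω ξ (X i))
  refine Nat.decreasingInduction' (P := fun m => ∀ i, f (PQuot.mkₐ Ω ξ (X i)) ∈ F m)
    (fun m _ hlm hm => ?_) (Nat.le_add_left l k) (fun i => hF.mono (Nat.le_add_right k l) (hk i)) i
  exact hF.apply_mkₐ_X_mem_of_mem_succ hΩ hiso hP hf
    (hwl.trans_le (Nat.mul_le_mul_left n (Nat.succ_le_succ hlm))) hm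

end IsReducedPoissonFiltration

namespace PQuot

open MvPolynomial

section CommRing

variable {𝕜 : Type*} [CommRing 𝕜] {Ω : MvPolynomial (Fin 3) 𝕜} {ξ : 𝕜}

/-- The filtration of `P_{Ω-ξ}` induced from the filtration of `𝕜[x,y,z]` by total degree. -/
noncomputable def degreeFiltration (Ω : MvPolynomial (Fin 3) 𝕜) (ξ : 𝕜) (k : ℕ) :
    Submodule 𝕜 (PQuot 𝕜 Ω ξ) :=
  (restrictTotalDegree (Fin 3) 𝕜 k).map (mkₐ Ω ξ).toLinearMap

theorem mem_degreeFiltration {k : ℕ} {a : PQuot 𝕜 Ω ξ} :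
    a ∈ degreeFiltration Ω ξ k ↔ ∃ p, p.totalDegree ≤ k ∧ mkₐ Ω ξ p = a := by
  simp only [degreeFiltration, Submodule.mem_map, mem_restrictTotalDegree]
  rfl

theorem mkₐ_mem_degreeFiltration {k : ℕ} {p : MvPolynomial (Fin 3) 𝕜} (hp : p.totalDegree ≤ k) :
    mkₐ Ω ξ p ∈ degreeFiltration Ω ξ k :=
  mem_degreeFiltration.2 ⟨p, hp, rfl⟩

theorem mem_degreeFiltration_of_pow_mem [IsDomain 𝕜] {d : ℕ} (hΩ : Ω.IsHomogeneous d)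
    (hd : 0 < d) (hΩ₀ : Ω ≠ 0) (hrad : IsRadical Ω) {k j N : ℕ} {a : PQuot 𝕜 Ω ξ}
    (ha : a ∈ degreeFiltration Ω ξ (k + 1)) (haN : a ^ N ∈ degreeFiltration Ω ξ j)
    (hj : j < N * (k + 1)) : a ∈ degreeFiltration Ω ξ k := by
  obtain ⟨p, hp, rfl⟩ := mem_degreeFiltration.1 ha
  obtain ⟨r, hr, hrp⟩ := mem_degreeFiltration.1 haN
  have hdvd : Ω - C ξ ∣ p ^ N - r := by
    rw [← mkₐ_eq_zero_iff, map_sub, map_pow, hrp, sub_self]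
  obtain ⟨q, hq⟩ :=
    exists_totalDegree_sub_mul_le_of_dvd_pow_sub hΩ hΩ₀ hd hrad hp (hr.trans_lt hj) hdvd
  refine mem_degreeFiltration.2 ⟨_, hq, ?_⟩
  rw [map_sub, mkₐ_eq_zero_iff.2 (dvd_mul_left _ q), sub_zero]

end CommRing

end PQuot

theorem totalDegree_prod_pderiv_le {σ ι R : Type*} [CommRing R] [Fintype ι]
    (h : ι → MvPolynomial σ R) (c : ι → σ) : (∏ i, MvPolynomial.pderiv (c i) (h i)).totalDegree ≤
      ∑ i, (h i).totalDegree - Fintype.card ι := by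
  by_cases h₀ : ∃ i, MvPolynomial.pderiv (c i) (h i) = 0
  · obtain ⟨i, hi⟩ := h₀
    rw [Finset.prod_eq_zero (Finset.mem_univ i) hi, MvPolynomial.totalDegree_zero]
    exact Nat.zero_le _
  push Not at h₀
  have hle : ∑ i, ((MvPolynomial.pderiv (c i) (h i)).totalDegree + 1) ≤ ∑ i, (h i).totalDegree :=
    Finset.sum_le_sum fun i _ => totalDegree_pderiv_lt (h₀ i)
  rw [Finset.sum_add_distrib, Finset.sum_const, Finset.card_univ, smul_eq_mul, mul_one] at hle
  exact (MvPolynomial.totalDegree_finsetProd _ _).trans (Nat.le_sub_of_add_le hle)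

theorem totalDegree_jacBracket_le {𝕜 : Type*} [CommRing 𝕜] (Ω f g : MvPolynomial (Fin 3) 𝕜) :
    (jacBracket Ω f g).totalDegree ≤ f.totalDegree + g.totalDegree + Ω.totalDegree - 3 := by
  rw [jacBracket, Matrix.det_apply, ← MvPolynomial.mem_restrictTotalDegree]
  refine sum_mem fun s _ => Submodule.smul_of_tower_mem _ _ ?_
  rw [MvPolynomial.mem_restrictTotalDegree]
  convert totalDegree_prod_pderiv_le (fun i => ![f, g, Ω] (s i)) id using 2
  · refine Finset.prod_congr rfl fun i _ => ?_
    generalize s i = k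
    fin_cases i <;> fin_cases k <;> rfl
  · rw [Equiv.sum_comp s fun i => (![f, g, Ω] i).totalDegree, Fin.sum_univ_three]
    rfl
  · exact (Fintype.card_fin 3).symm

namespace PQuot

open MvPolynomial

variable {𝕜 : Type*} [Field 𝕜] {Ω : MvPolynomial (Fin 3) 𝕜} {ξ : 𝕜} {n : ℕ}

theorem bracket_mem_degreeFiltration {P : PoissonStructure 𝕜 (PQuot 𝕜 Ω ξ)}
    (hP : IsInducedBracket Ω ξ P) (hΩ : Ω.totalDegree ≤ n + 3) {i j : ℕ} {a b : PQuot 𝕜 Ω ξ}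
    (ha : a ∈ degreeFiltration Ω ξ i) (hb : b ∈ degreeFiltration Ω ξ j) :
    P.bracket a b ∈ degreeFiltration Ω ξ (i + j + n) := by
  obtain ⟨p, hp, rfl⟩ := mem_degreeFiltration.1 ha
  obtain ⟨q, hq, rfl⟩ := mem_degreeFiltration.1 hb
  refine mem_degreeFiltration.2 ⟨jacBracket Ω p q, ?_, (hP p q).symm⟩
  exact (totalDegree_jacBracket_le Ω p q).trans (by omega)

theorem isReducedPoissonFiltration_degreeFiltration {P : PoissonStructure 𝕜 (PQuot 𝕜 Ω ξ)}
    (hP : IsInducedBracket Ω ξ P) (hΩ : Ω.IsHomogeneous (n + 3))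
    (hiso : HasIsolatedSingularity Ω) :
    IsReducedPoissonFiltration P n (degreeFiltration Ω ξ) where
  mono _ _ hij := Submodule.map_mono fun p hp => by
    rw [mem_restrictTotalDegree] at hp ⊢
    exact hp.trans hij
  exhaustive a := by
    obtain ⟨p, rfl⟩ := mkₐ_surjective a
    exact ⟨p.totalDegree, mkₐ_mem_degreeFiltration le_rfl⟩
  one_mem := map_one (mkₐ Ω ξ) ▸ mkₐ_mem_degreeFiltration totalDegree_one.le
  mul_mem ha hb := by
    obtain ⟨p, hp, rfl⟩ := mem_degreeFiltration.1 ha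
    obtain ⟨q, hq, rfl⟩ := mem_degreeFiltration.1 hb
    rw [← map_mul]
    exact mkₐ_mem_degreeFiltration ((totalDegree_mul p q).trans (Nat.add_le_add hp hq))
  bracket_mem := bracket_mem_degreeFiltration hP hΩ.totalDegree_le
  mem_of_pow_mem := mem_degreeFiltration_of_pow_mem hΩ (Nat.succ_pos _) (hiso.squarefree hΩ).ne_zero
    (hiso.squarefree hΩ).isRadical

theorem eq_zero_of_forall_algHom [IsAlgClosed 𝕜] (hΩ : Ω.IsHomogeneous (n + 3))
    (hiso : HasIsolatedSingularity Ω) {a : PQuot 𝕜 Ω ξ}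
    (ha : ∀ φ : PQuot 𝕜 Ω ξ →ₐ[𝕜] 𝕜, φ a = 0) : a = 0 :=
  eq_zero_of_forall_algHom_eq_zero (isRadical_iff_span_singleton.1
    (hiso.squarefree_sub_C hΩ ξ).isRadical) ha

instance (k : ℕ) : FiniteDimensional 𝕜 (degreeFiltration Ω ξ k) :=
  Module.Finite.map _ _

theorem finrank_degreeFiltration {d k : ℕ} (hΩ : Ω.IsHomogeneous d) (hΩ₀ : Ω ≠ 0) (hk : k < d) :
    Module.finrank 𝕜 (degreeFiltration Ω ξ k) =
      Module.finrank 𝕜 (restrictTotalDegree (Fin 3) 𝕜 k) := by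
  rw [degreeFiltration, ← LinearMap.range_domRestrict]
  refine LinearMap.finrank_range_of_inj ((injective_iff_map_eq_zero _).2 fun p hp => ?_)
  exact Subtype.ext (eq_zero_of_sub_C_dvd hΩ hΩ₀
    (((mem_restrictTotalDegree _ _ _).1 p.2).trans_lt hk) (mkₐ_eq_zero_iff.1 hp))

variable {Ω' : MvPolynomial (Fin 3) 𝕜} {ξ' : 𝕜} {g : PQuot 𝕜 Ω ξ →ₐ[𝕜] PQuot 𝕜 Ω' ξ'}

theorem map_degreeFiltration_eq_of_le {d k : ℕ} (hΩ : Ω.IsHomogeneous d) (hΩ₀ : Ω ≠ 0) (hk : k < d)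
    (hg : Function.Injective g)
    (hle : (degreeFiltration Ω ξ k).map g.toLinearMap ≤ degreeFiltration Ω' ξ' k) :
    (degreeFiltration Ω ξ k).map g.toLinearMap = degreeFiltration Ω' ξ' k := by
  refine Submodule.eq_of_le_of_finrank_le hle ?_
  calc
    Module.finrank 𝕜 (degreeFiltration Ω' ξ' k)
      ≤ Module.finrank 𝕜 (restrictTotalDegree (Fin 3) 𝕜 k) := Submodule.finrank_map_le _ _
    _ = Module.finrank 𝕜 (degreeFiltration Ω ξ k) := (finrank_degreeFiltration hΩ hΩ₀ hk).symm
    _ = Module.finrank 𝕜 ((degreeFiltration Ω ξ k).map g.toLinearMap) :=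
      (Submodule.equivMapOfInjective g.toLinearMap hg _).finrank_eq

theorem surjective_of_injective {P : PoissonStructure 𝕜 (PQuot 𝕜 Ω ξ)}
    {P' : PoissonStructure 𝕜 (PQuot 𝕜 Ω' ξ')} (hP : IsInducedBracket Ω ξ P)
    (hP' : IsInducedBracket Ω' ξ' P') (hn : 1 ≤ n) (hΩ : Ω.IsHomogeneous (n + 3))
    (hΩ' : Ω'.IsHomogeneous (n + 3)) (hiso : HasIsolatedSingularity Ω)
    (hiso' : HasIsolatedSingularity Ω') (hg : IsPoissonHom P P' g) (hinj : Function.Injective g) :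
    Function.Surjective g := by
  have hF' := isReducedPoissonFiltration_degreeFiltration hP' hΩ' hiso'
  have hX_le : ∀ i, g (mkₐ Ω ξ (X i)) ∈ degreeFiltration Ω' ξ' 1 :=
    hF'.apply_mkₐ_X_mem hΩ hiso hP hg (by omega)
  have hle : (degreeFiltration Ω ξ 1).map g.toLinearMap ≤ degreeFiltration Ω' ξ' 1 := by
    refine Submodule.map_le_iff_le_comap.2 fun a ha => ?_
    obtain ⟨p, hp, rfl⟩ := mem_degreeFiltration.1 ha
    exact hF'.apply_mkₐ_mem (e := 1) hX_le hp
  have hmap := map_degreeFiltration_eq_of_le hΩ (hiso.squarefree hΩ).ne_zero (by omega) hinj hle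
  have hX_range : ∀ i, mkₐ Ω' ξ' (X i) ∈ g.range := fun i => by
    obtain ⟨a, -, ha⟩ := hmap.ge (mkₐ_mem_degreeFiltration (totalDegree_X i).le)
    exact ⟨a, ha⟩
  exact fun b => range_le_of_forall_X_mem (AlgHom.id 𝕜 _) hX_range ⟨b, rfl⟩

end PQuot

section BaseChange

variable {𝕜 A : Type*} [Field 𝕜] [CommRing A] [Algebra 𝕜 A]

section Module

variable {M : Type*} [AddCommGroup M] [Module 𝕜 M] {V : Submodule 𝕜 M}

theorem restrictScalars_baseChange_le_iff {W : Submodule 𝕜 (A ⊗[𝕜] M)} :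
    (V.baseChange A).restrictScalars 𝕜 ≤ W ↔ ∀ a : A, ∀ m ∈ V, a ⊗ₜ m ∈ W := by
  refine ⟨fun h a m hm => h (Submodule.tmul_mem_baseChange_of_mem a hm), ?_⟩
  rintro h _ ⟨t, rfl⟩
  induction t using TensorProduct.induction_on with
  | zero => simp
  | tmul a m => exact h a m m.2
  | add s t hs ht => simpa only [map_add] using add_mem hs ht

theorem bilinear_mem_of_mem_baseChange {N P : Type*} [AddCommGroup N] [Module 𝕜 N]
    [AddCommGroup P] [Module 𝕜 P] {V' : Submodule 𝕜 N} {W : Submodule 𝕜 P}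
    (β : A ⊗[𝕜] M →ₗ[𝕜] A ⊗[𝕜] N →ₗ[𝕜] P)
    (hβ : ∀ a a' : A, ∀ m ∈ V, ∀ m' ∈ V', β (a ⊗ₜ m) (a' ⊗ₜ m') ∈ W)
    {b : A ⊗[𝕜] M} {b' : A ⊗[𝕜] N} (hb : b ∈ V.baseChange A) (hb' : b' ∈ V'.baseChange A) :
    β b b' ∈ W := by
  suffices (V.baseChange A).restrictScalars 𝕜 ≤ W.comap (β.flip b') from this hb
  refine restrictScalars_baseChange_le_iff.2 fun a m hm => ?_
  suffices (V'.baseChange A).restrictScalars 𝕜 ≤ W.comap (β (a ⊗ₜ m)) from this hb'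
  exact restrictScalars_baseChange_le_iff.2 fun a' m' hm' => hβ a a' m hm m' hm'

/-- The slice map `φ ⊗ id : A ⊗ M → 𝕜 ⊗ M = M` of a functional `φ` on `A`. -/
noncomputable def slice (M : Type*) [AddCommGroup M] [Module 𝕜 M] (φ : Module.Dual 𝕜 A) :
    A ⊗[𝕜] M →ₗ[𝕜] M :=
  (TensorProduct.lid 𝕜 M).toLinearMap ∘ₗ φ.rTensor M

theorem slice_tmul (φ : Module.Dual 𝕜 A) (a : A) (m : M) : slice M φ (a ⊗ₜ m) = φ a • m := by
  simp [slice]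

theorem slice_mem_of_mem_baseChange (φ : Module.Dual 𝕜 A) {b : A ⊗[𝕜] M}
    (hb : b ∈ V.baseChange A) : slice M φ b ∈ V := by
  suffices (V.baseChange A).restrictScalars 𝕜 ≤ V.comap (slice M φ) from this hb
  refine restrictScalars_baseChange_le_iff.2 fun a m hm => ?_
  rw [Submodule.mem_comap, slice_tmul]
  exact V.smul_mem _ hm

theorem apply_rid_lTensor (φ : Module.Dual 𝕜 A) (ψ : Module.Dual 𝕜 M) (b : A ⊗[𝕜] M) :
    φ (TensorProduct.rid 𝕜 A (ψ.lTensor A b)) = ψ (slice M φ b) := by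
  induction b using TensorProduct.induction_on with
  | zero => simp
  | tmul a m => simp [slice_tmul, mul_comm]
  | add s t hs ht => simp only [map_add, hs, ht]

theorem mem_baseChange_of_forall_slice_mem {ι : Type*} {φ : ι → Module.Dual 𝕜 A}
    (hφ : ∀ a, (∀ i, φ i a = 0) → a = 0) {b : A ⊗[𝕜] M} (hb : ∀ i, slice M (φ i) b ∈ V) :
    b ∈ V.baseChange A := by
  classical
  have hquot : V.mkQ.lTensor A b = 0 := by
    refine (TensorProduct.equivFinsuppOfBasisRight
      (Module.Basis.ofVectorSpace 𝕜 (M ⧸ V))).map_eq_zero_iff.1 (Finsupp.ext fun k => ?_)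
    rw [TensorProduct.equivFinsuppOfBasisRight_apply, ← LinearMap.comp_apply,
      ← LinearMap.lTensor_comp]
    refine hφ _ fun i => ?_
    rw [apply_rid_lTensor, LinearMap.comp_apply, Submodule.mkQ_apply,
      (Submodule.Quotient.mk_eq_zero V).2 (hb i), map_zero]
  exact (lTensor_mkQ A V).le hquot

theorem mem_baseChange_iInf {ι : Type*} {V : ι → Submodule 𝕜 M} {b : A ⊗[𝕜] M}
    (hb : ∀ i, b ∈ (V i).baseChange A) : b ∈ (⨅ i, V i).baseChange A :=
  mem_baseChange_of_forall_slice_mem (fun a => (Module.forall_dual_apply_eq_zero_iff 𝕜 a).1)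
    fun φ => (Submodule.mem_iInf V).2 fun i => slice_mem_of_mem_baseChange φ (hb i)

end Module

variable {R : Type*} [CommRing R] [Algebra 𝕜 R]

theorem slice_pow (φ : A →ₐ[𝕜] 𝕜) (b : A ⊗[𝕜] R) (N : ℕ) :
    slice R φ.toLinearMap (b ^ N) = slice R φ.toLinearMap b ^ N :=
  map_pow ((Algebra.TensorProduct.lid 𝕜 R).toAlgHom.comp
    (Algebra.TensorProduct.map φ (AlgHom.id 𝕜 R))) b N

theorem mem_range_includeLeft_of_mem_baseChange_one {b : A ⊗[𝕜] R}
    (hb : b ∈ (1 : Submodule 𝕜 R).baseChange A) :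
    b ∈ (Algebra.TensorProduct.includeLeft : A →ₐ[𝕜] A ⊗[𝕜] R).range := by
  rw [Submodule.one_eq_span, Submodule.baseChange_span, Set.image_singleton,
    Submodule.mem_span_singleton] at hb
  obtain ⟨a, rfl⟩ := hb
  exact ⟨a, by simp [TensorProduct.smul_tmul']⟩

theorem IsReducedPoissonFiltration.baseChange {PA : PoissonStructure 𝕜 A}
    {PR : PoissonStructure 𝕜 R} {PT : PoissonStructure 𝕜 (A ⊗[𝕜] R)}
    {w : ℕ} {F : ℕ → Submodule 𝕜 R} (hF : IsReducedPoissonFiltration PR w F)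
    (hPT : IsTensorBracket PA PR PT) (hA : ∀ a : A, (∀ φ : A →ₐ[𝕜] 𝕜, φ a = 0) → a = 0) :
    IsReducedPoissonFiltration PT w fun k => ((F k).baseChange A).restrictScalars 𝕜 where
  mono _ _ hij := Submodule.baseChange_mono A (hF.mono hij)
  exhaustive b := by
    induction b using TensorProduct.induction_on with
    | zero => exact ⟨0, zero_mem _⟩
    | tmul a r =>
      obtain ⟨k, hk⟩ := hF.exhaustive r
      exact ⟨k, Submodule.tmul_mem_baseChange_of_mem a hk⟩
    | add s t hs ht =>
      obtain ⟨k, hk⟩ := hs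
      obtain ⟨l, hl⟩ := ht
      exact ⟨max k l, add_mem (Submodule.baseChange_mono A (hF.mono (le_max_left k l)) hk)
        (Submodule.baseChange_mono A (hF.mono (le_max_right k l)) hl)⟩
  one_mem := Submodule.tmul_mem_baseChange_of_mem 1 hF.one_mem
  mul_mem hb hb' := by
    refine bilinear_mem_of_mem_baseChange (LinearMap.mul 𝕜 (A ⊗[𝕜] R))
      (fun a a' r hr r' hr' => ?_) hb hb'
    rw [LinearMap.mul_apply', Algebra.TensorProduct.tmul_mul_tmul]
    exact Submodule.tmul_mem_baseChange_of_mem _ (hF.mul_mem hr hr')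
  bracket_mem hb hb' := by
    refine bilinear_mem_of_mem_baseChange PT.bracketₗ (fun a a' r hr r' hr' => ?_) hb hb'
    rw [PT.bracketₗ_apply, hPT]
    exact add_mem
      (Submodule.tmul_mem_baseChange_of_mem _ (hF.mono (Nat.le_add_right _ w) (hF.mul_mem hr hr')))
      (Submodule.tmul_mem_baseChange_of_mem _ (hF.bracket_mem hr hr'))
  mem_of_pow_mem hb hbN hj := by
    refine mem_baseChange_of_forall_slice_mem (φ := fun φ : A →ₐ[𝕜] 𝕜 => φ.toLinearMap) hA
      fun φ => ?_
    have hφ := slice_mem_of_mem_baseChange φ.toLinearMap hbN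
    rw [slice_pow] at hφ
    exact hF.mem_of_pow_mem (slice_mem_of_mem_baseChange φ.toLinearMap hb) hφ hj

end BaseChange

namespace IsWValuation

variable {𝕜 R : Type*} [Field 𝕜] [CommRing R] [Algebra 𝕜 R] {PR : PoissonStructure 𝕜 R}
  {ν : R → WithTop ℤ}

section

variable {w : ℤ}

theorem map_one (hν : IsWValuation PR w ν) : ν 1 = 0 := by
  simpa using hν.scalar 1 one_ne_zero

theorem map_pow (hν : IsWValuation PR w ν) (r : R) (N : ℕ) : ν (r ^ N) = N • ν r := by
  induction N with
  | zero => simpa using hν.map_one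
  | succ N ih => rw [pow_succ, hν.map_mul, ih, succ_nsmul]

/-- The ascending filtration `{r | ν r ≥ -k}` attached to a `w`-valuation. -/
def filtration (hν : IsWValuation PR w ν) (k : ℕ) : Submodule 𝕜 R where
  carrier := {r | ((-k : ℤ) : WithTop ℤ) ≤ ν r}
  zero_mem' := by simp [(hν.eq_top_iff 0).2 rfl]
  add_mem' ha hb := (le_min ha hb).trans (hν.map_add _ _)
  smul_mem' c r hr := by
    obtain rfl | hc := eq_or_ne c 0
    · simp [(hν.eq_top_iff 0).2 rfl]
    · simpa [Algebra.smul_def, hν.map_mul, hν.scalar c hc] using hr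

theorem mem_filtration (hν : IsWValuation PR w ν) {k : ℕ} {r : R} :
    r ∈ hν.filtration k ↔ ((-k : ℤ) : WithTop ℤ) ≤ ν r :=
  Iff.rfl

end

theorem isReducedPoissonFiltration_filtration {w : ℕ} (hν : IsWValuation PR w ν) :
    IsReducedPoissonFiltration PR w hν.filtration where
  mono _ _ hij _ hr := le_trans (WithTop.coe_le_coe.2 (neg_le_neg (Int.ofNat_le.2 hij))) hr
  exhaustive r := by
    cases hr : ν r with
    | top => exact ⟨0, by simp [mem_filtration, hr]⟩
    | coe x => exact ⟨x.natAbs, by rw [mem_filtration, hr, WithTop.coe_le_coe]; omega⟩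
  one_mem := by simp [mem_filtration, hν.map_one]
  mul_mem {i j a b} ha hb := by
    rw [mem_filtration, hν.map_mul, Nat.cast_add, neg_add, WithTop.coe_add]
    exact add_le_add ha hb
  bracket_mem {i j a b} ha hb := by
    have hab := (add_le_add ha hb).trans (hν.map_bracket a b)
    rw [mem_filtration]
    cases hx : ν (PR.bracket a b) with
    | top => exact le_top
    | coe x =>
      rw [hx] at hab
      norm_cast at hab ⊢
      omega
  mem_of_pow_mem {k j N r} _ hrN hj := by
    rw [mem_filtration, hν.map_pow] at hrN
    rw [mem_filtration]
    cases hx : ν r with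
    | top => exact le_top
    | coe x =>
      rw [hx, ← WithTop.coe_nsmul, WithTop.coe_le_coe] at hrN
      rw [WithTop.coe_le_coe]
      by_contra! hlt
      have hmul : (N : ℤ) * x ≤ N * (-(k + 1)) :=
        mul_le_mul_of_nonneg_left (by omega) (Nat.cast_nonneg N)
      zify at hj
      rw [nsmul_eq_mul] at hrN
      linarith

end IsWValuation

section Detection

variable {𝕜 R : Type*} [Field 𝕜] [CommRing R] [Algebra 𝕜 R]

theorem mem_range_includeLeft_of_forall_valuation {A : Type*} [CommRing A] [Algebra 𝕜 A]
    {PR : PoissonStructure 𝕜 R} {w : ℤ}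
    (hR : ∀ r : R, (¬ ∃ c : 𝕜, r = algebraMap 𝕜 R c) →
      ∃ ν : R → WithTop ℤ, IsWValuation PR w ν ∧ ν r < 0)
    {b : A ⊗[𝕜] R}
    (hb : ∀ ν : R → WithTop ℤ, ∀ hν : IsWValuation PR w ν, b ∈ (hν.filtration 0).baseChange A) :
    b ∈ (Algebra.TensorProduct.includeLeft : A →ₐ[𝕜] A ⊗[𝕜] R).range := by
  have hle : ⨅ ν : {ν // IsWValuation PR w ν}, ν.2.filtration 0 ≤ (1 : Submodule 𝕜 R) := by
    intro r hr
    by_contra hr_scalar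
    obtain ⟨ν, hν, hνr⟩ := hR r fun ⟨c, hc⟩ => hr_scalar (Submodule.mem_one.2 ⟨c, hc.symm⟩)
    have hrν : r ∈ hν.filtration 0 := (Submodule.mem_iInf _).1 hr ⟨ν, hν⟩
    exact hνr.not_ge (by simpa [IsWValuation.mem_filtration] using hrν)
  exact mem_range_includeLeft_of_mem_baseChange_one
    (Submodule.baseChange_mono A hle (mem_baseChange_iInf fun ν => hb ν ν.2))

theorem exists_comp_eq_of_range_le {A B C : Type*} [CommRing A] [CommRing B] [CommRing C]
    [Algebra 𝕜 A] [Algebra 𝕜 B] [Algebra 𝕜 C] {f : A →ₐ[𝕜] C} {j : B →ₐ[𝕜] C}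
    (hj : Function.Injective j) (hfj : f.range ≤ j.range) : ∃ g : A →ₐ[𝕜] B, j.comp g = f := by
  let f' : A →ₐ[𝕜] j.range := f.codRestrict j.range fun a => hfj ⟨a, rfl⟩
  refine ⟨(AlgEquiv.ofInjective j hj).symm.toAlgHom.comp f', AlgHom.ext fun a => ?_⟩
  exact congrArg Subtype.val ((AlgEquiv.ofInjective j hj).apply_symm_apply (f' a))

end Detection

theorem potentials_relDixmier_of_valuation_condition_general
    {𝕜 R : Type*} [Field 𝕜] [IsAlgClosed 𝕜]
    [CommRing R] [Nontrivial R] [Algebra 𝕜 R]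
    (n : ℕ) (hn : 1 ≤ n)
    (Ω Ω' : MvPolynomial (Fin 3) 𝕜)
    (hhom : Ω.IsHomogeneous (n + 3)) (hhom' : Ω'.IsHomogeneous (n + 3))
    (hiso : HasIsolatedSingularity Ω) (hiso' : HasIsolatedSingularity Ω')
    (ξ ξ' : 𝕜)
    (P : PoissonStructure 𝕜 (PQuot 𝕜 Ω ξ)) (hP : IsInducedBracket Ω ξ P)
    (P' : PoissonStructure 𝕜 (PQuot 𝕜 Ω' ξ')) (hP' : IsInducedBracket Ω' ξ' P')
    (PR : PoissonStructure 𝕜 R)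
    (hR : ∀ r : R, (¬ ∃ c : 𝕜, r = algebraMap 𝕜 R c) →
      ∃ ν : R → WithTop ℤ, IsWValuation PR ((n : ℤ) - 1) ν ∧ ν r < 0)
    (PT : PoissonStructure 𝕜 (PQuot 𝕜 Ω' ξ' ⊗[𝕜] R)) (hPT : IsTensorBracket P' PR PT)
    (f : PQuot 𝕜 Ω ξ →ₐ[𝕜] PQuot 𝕜 Ω' ξ' ⊗[𝕜] R)
    (hf : IsPoissonHom P PT f) (hinj : Function.Injective f) :
    Set.range f = Set.range fun p : PQuot 𝕜 Ω' ξ' => p ⊗ₜ[𝕜] (1 : R) := by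
  obtain ⟨w, rfl⟩ : ∃ w, n = w + 1 := ⟨n - 1, by omega⟩
  rw [Nat.cast_succ, add_sub_cancel_right] at hR
  let j : PQuot 𝕜 Ω' ξ' →ₐ[𝕜] PQuot 𝕜 Ω' ξ' ⊗[𝕜] R := Algebra.TensorProduct.includeLeft
  have hj : Function.Injective j :=
    Algebra.TensorProduct.includeLeft_injective (algebraMap 𝕜 R).injective
  have hX (i : Fin 3) : f (PQuot.mkₐ Ω ξ (MvPolynomial.X i)) ∈ j.range :=
    mem_range_includeLeft_of_forall_valuation hR fun ν hν =>
      (hν.isReducedPoissonFiltration_filtration.baseChange hPT fun _ =>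
        PQuot.eq_zero_of_forall_algHom hhom' hiso').apply_mkₐ_X_mem hhom hiso hP hf (by omega) i
  obtain ⟨g, rfl⟩ := exists_comp_eq_of_range_le hj (PQuot.range_le_of_forall_X_mem f hX)
  have hg : IsPoissonHom P P' g := hPT.isPoissonHom_includeLeft.of_comp_injective hj hf
  have hg_inj : Function.Injective g := Function.Injective.of_comp (f := j) hinj
  have hg_surj : Function.Surjective g :=
    PQuot.surjective_of_injective hP hP' hn hhom hhom' hiso hiso' hg hg_inj
  exact hg_surj.range_comp j

/-- Theorem 2.15: the class `𝒫ₙ` is `ℱ_{n-1}`-Dixmier: any injective Poisson morphism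
`P_{Ω-ξ} → P_{Ω'-ξ'} ⊗ R`, with `R` a Poisson domain all of whose elements outside `𝕜·1`
are detected by a negative nonpositive `(n-1)`-valuation, has image `P_{Ω'-ξ'} ⊗ 𝕜·1`. -/
theorem potentials_relDixmier_of_valuation_condition
    {𝕜 R : Type*} [Field 𝕜] [IsAlgClosed 𝕜] [CharZero 𝕜]
    [CommRing R] [IsDomain R] [Algebra 𝕜 R]
    (n : ℕ) (hn : 1 ≤ n)
    (Ω Ω' : MvPolynomial (Fin 3) 𝕜)
    (hhom : Ω.IsHomogeneous (n + 3)) (hhom' : Ω'.IsHomogeneous (n + 3))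
    (hiso : HasIsolatedSingularity Ω) (hiso' : HasIsolatedSingularity Ω')
    (ξ ξ' : 𝕜)
    (P : PoissonStructure 𝕜 (PQuot 𝕜 Ω ξ)) (hP : IsInducedBracket Ω ξ P)
    (P' : PoissonStructure 𝕜 (PQuot 𝕜 Ω' ξ')) (hP' : IsInducedBracket Ω' ξ' P')
    (PR : PoissonStructure 𝕜 R)
    (hR : ∀ r : R, (¬ ∃ c : 𝕜, r = algebraMap 𝕜 R c) →
      ∃ ν : R → WithTop ℤ, IsWValuation PR ((n : ℤ) - 1) ν ∧
        (∀ x : R, x ≠ 0 → ν x ≤ 0) ∧ ν r < 0)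
    (PT : PoissonStructure 𝕜 (PQuot 𝕜 Ω' ξ' ⊗[𝕜] R)) (hPT : IsTensorBracket P' PR PT)
    (f : PQuot 𝕜 Ω ξ →ₐ[𝕜] PQuot 𝕜 Ω' ξ' ⊗[𝕜] R)
    (hf : IsPoissonHom P PT f) (hinj : Function.Injective f) :
    Set.range f = Set.range fun p : PQuot 𝕜 Ω' ξ' => p ⊗ₜ[𝕜] (1 : R) :=
  potentials_relDixmier_of_valuation_condition_general n hn Ω Ω' hhom hhom' hiso hiso' ξ ξ' P hP
    P' hP' PR (fun r hr => (hR r hr).imp fun _ hν => ⟨hν.1, hν.2.2⟩) PT hPT f hf hinj
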